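/- Fix orders q = (q_1,…,q_d) and r ∈ ℕ₀^d with r_k ≤ q_k − 1, and in each direction k a quasi-uniform knot sequence (constant C₀) with N_k interior knots and J_k = N_k + q_k. Let W_r be the weighted finite-differencing matrix defined below. Then there is a constant C > 0 depending only on q, r, d and C₀ such that ‖W_r‖_{(∞,∞)} ≤ C ∏_{k=1}^d J_k^{r_k}, ‖W_rᵀ‖_{(∞,∞)} ≤ C ∏_{k=1}^d J_k^{r_k}, and ‖W_rᵀ W_r‖_{(2,2)} ≤ C ∏_{k=1}^d J_k^{2r_k}. -/

import Mathlib

open MeasureTheory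

/-- A knot sequence `0 = t 0 < t 1 < ⋯ < t N < t (N+1) = 1` on `[0,1]` with `N` interior
knots. -/
structure KnotSeq where
  N : ℕ
  t : ℕ → ℝ
  t0 : t 0 = 0
  tN : t (N + 1) = 1
  mono : ∀ l, l < N + 1 → t l < t (l + 1)

namespace KnotSeq

/-- The extended knot sequence: the boundary knots `0` and `1` are repeated. -/
noncomputable def T (ks : KnotSeq) (l : ℤ) : ℝ :=
  if l ≤ 0 then 0 else if (ks.N + 1 : ℤ) ≤ l then 1 else ks.t l.toNat

/-- The mesh size `Δ = max_{1 ≤ l ≤ N+1} (t l − t (l−1))`. -/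
noncomputable def mesh (ks : KnotSeq) : ℝ :=
  (Finset.Icc 1 (ks.N + 1)).sup' (Finset.nonempty_Icc.mpr (by omega))
    fun l => ks.t l - ks.t (l - 1)

/-- Quasi-uniformity with constant `C₀`: the mesh size is at most `C₀` times every
spacing. -/
def QuasiUniform (ks : KnotSeq) (C₀ : ℝ) : Prop :=
  ∀ l ∈ Finset.Icc 1 (ks.N + 1), ks.mesh ≤ C₀ * (ks.t l - ks.t (l - 1))

end KnotSeq

/-- The normalized B-spline `B_{j,m}` of order `m` for the extended knot sequence `T`,
defined by the Cox–de Boor recursion.  `B_{j,1}` is the indicator of `[T (j−1), T j)`,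
also including the point `1` when `T j = 1 > T (j−1)`; for orders `≥ 2` the recursion is
`B_{j,m}(x) = ((x − T(j−m))/(T(j−1) − T(j−m))) B_{j−1,m−1}(x)
  + ((T j − x)/(T j − T(j−m+1))) B_{j,m−1}(x)`,
a term with zero denominator being zero (Lean's division-by-zero convention). -/
noncomputable def Bspl (T : ℤ → ℝ) : ℕ → ℤ → ℝ → ℝ
  | 0, _, _ => 0
  | 1, j, x =>
      if T (j - 1) ≤ x ∧ (x < T j ∨ (x = 1 ∧ T j = 1 ∧ T (j - 1) < 1)) then 1 else 0
  | m + 2, j, x =>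
      (x - T (j - (m + 2))) / (T (j - 1) - T (j - (m + 2))) * Bspl T (m + 1) (j - 1) x
        + (T j - x) / (T j - T (j - (m + 1))) * Bspl T (m + 1) j x
/-- The weighted finite-differencing operator `𝔇_{j_k}^{r_k}` in direction `k`, acting on
coefficient arrays indexed by `ℤ^d`:  `𝔇^0 θ = θ` and
`𝔇^{r+1} θ_j = (q_k − (r+1)) (𝔇^r θ_{j + e_k} − 𝔇^r θ_j)/(t_{k,j_k} − t_{k,j_k−q_k+1})`. -/
noncomputable def Dop {d : ℕ} (k : Fin d) (qk : ℕ) (T : ℤ → ℝ) :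
    ℕ → ((Fin d → ℤ) → ℝ) → ((Fin d → ℤ) → ℝ)
  | 0, θ => θ
  | r + 1, θ => fun j =>
      ((qk : ℝ) - (r + 1)) *
          (Dop k qk T r θ (Function.update j k (j k + 1)) - Dop k qk T r θ j) /
        (T (j k) - T (j k - qk + 1))

/-- The composite operator `𝔇^r = 𝔇^{r_1}_{j_1} ⋯ 𝔇^{r_d}_{j_d}` applying the weighted
finite differencing in every direction. -/
noncomputable def Dall {d : ℕ} (q : Fin d → ℕ) (T : Fin d → ℤ → ℝ) (r : Fin d → ℕ)
    (θ : (Fin d → ℤ) → ℝ) : (Fin d → ℤ) → ℝ :=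
  (List.finRange d).foldr (fun k acc => Dop k (q k) (T k) (r k) acc) θ

/-- The matrix `W_r` of the linear map `θ ↦ (𝔇^r θ_i)_{1 ≤ i_k ≤ J_k − r_k}`, with rows
indexed by multi-indices `i` with `1 ≤ i_k ≤ J_k − r_k` and columns by multi-indices `j`
with `1 ≤ j_k ≤ J_k` (here `J_k = N_k + q_k`); its `(i,j)` entry is the coefficient of
`θ_j` in `(𝔇^r θ)_i`, i.e. `𝔇^r` applied to the standard basis array `e_j`, evaluated
at `i`. -/
noncomputable def Wmat {d : ℕ} (q r : Fin d → ℕ) (ks : Fin d → KnotSeq)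
    (i : (k : Fin d) → Fin ((ks k).N + q k - r k))
    (j : (k : Fin d) → Fin ((ks k).N + q k)) : ℝ :=
  Dall q (fun k => (ks k).T) r
    (fun idx => if idx = (fun k => ((j k : ℕ) : ℤ) + 1) then 1 else 0)
    (fun k => ((i k : ℕ) : ℤ) + 1)

/-!
On a product array the operator `𝔇^r` acts factor by factor, so `W_r` is the Kronecker product
of one-dimensional weighted difference matrices, and its row and column sums are products of the
one-dimensional ones.  In one dimension each of the `r` differencing steps combines two entries
with a weight of size at most `q C₀ J`: quasi-uniformity bounds every nonzero knot difference below
by `(C₀ (N + 1))⁻¹`.  This yields the factor `(2 q C₀ J) ^ r` for rows and for columns, and Schur's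
test turns the two bounds into the spectral one.
-/

/-- The product array `j ↦ ∏ k, f k (j k)`, that is, the elementary tensor `⨂ k, f k`. -/
def productArray {κ : Type*} [Fintype κ] (f : κ → ℤ → ℝ) (j : κ → ℤ) : ℝ :=
  ∏ k, f k (j k)

/-- The `r`-fold iterated weighted forward difference of a sequence, where `w s` is the weight
sequence of step `s + 1`. -/
def weightedDiff (w : ℕ → ℤ → ℝ) : ℕ → (ℤ → ℝ) → ℤ → ℝ
  | 0, f => f
  | r + 1, f => fun j => w r j * (weightedDiff w r f (j + 1) - weightedDiff w r f j)

/-- The weight of step `s + 1` of the order-`q` finite differencing over the knots `T`.  It is `0`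
where `T j = T (j - q + 1)`, by the convention `x / 0 = 0`. -/
noncomputable def knotWeight (q : ℕ) (T : ℤ → ℝ) (s : ℕ) (j : ℤ) : ℝ :=
  ((q : ℝ) - (s + 1)) / (T j - T (j - q + 1))

section ProductArray

theorem productArray_update_update {κ : Type*} [Fintype κ] [DecidableEq κ] (f : κ → ℤ → ℝ) (k : κ)
    (g : ℤ → ℝ) (j : κ → ℤ) (m : ℤ) :
    productArray (Function.update f k g) (Function.update j k m) =
      g m * ∏ l ∈ {k}ᶜ, f l (j l) := by
  rw [productArray, Fintype.prod_eq_mul_prod_compl k, Function.update_self, Function.update_self]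
  congr 1
  refine Finset.prod_congr rfl fun l hl => ?_
  have hlk : l ≠ k := by simpa using hl
  rw [Function.update_of_ne hlk, Function.update_of_ne hlk]

theorem productArray_update {κ : Type*} [Fintype κ] [DecidableEq κ] (f : κ → ℤ → ℝ) (k : κ)
    (g : ℤ → ℝ) (j : κ → ℤ) :
    productArray (Function.update f k g) j = g (j k) * ∏ l ∈ {k}ᶜ, f l (j l) := by
  simpa only [Function.update_eq_self] using productArray_update_update f k g j (j k)

theorem productArray_single {κ : Type*} [Fintype κ] (j i : κ → ℤ) :
    productArray (fun k => Pi.single (j k) 1) i = if i = j then 1 else 0 := by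
  simp only [productArray, Pi.single_apply, Fintype.prod_boole, funext_iff]

variable {d : ℕ}

theorem Dop_productArray (k : Fin d) (q : ℕ) (T : ℤ → ℝ) (r : ℕ) (f : Fin d → ℤ → ℝ) :
    Dop k q T r (productArray f) =
      productArray (Function.update f k (weightedDiff (knotWeight q T) r (f k))) := by
  induction r with
  | zero => simp only [Dop, weightedDiff, Function.update_eq_self]
  | succ r ih =>
    funext j
    simp only [Dop, ih, productArray_update_update]
    simp only [productArray_update, weightedDiff, knotWeight]
    ring

theorem foldr_Dop_productArray (q : Fin d → ℕ) (T : Fin d → ℤ → ℝ) (r : Fin d → ℕ)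
    (f : Fin d → ℤ → ℝ) {L : List (Fin d)} (hL : L.Nodup) :
    L.foldr (fun k acc => Dop k (q k) (T k) (r k) acc) (productArray f) =
      productArray fun k =>
        if k ∈ L then weightedDiff (knotWeight (q k) (T k)) (r k) (f k) else f k := by
  induction L with
  | nil => simp
  | cons k L ih =>
    obtain ⟨hk, hL⟩ := List.nodup_cons.mp hL
    rw [List.foldr_cons, ih hL, Dop_productArray]
    congr 1
    funext l
    rcases eq_or_ne l k with rfl | hlk
    · simp [hk]
    · simp [hlk]

theorem Dall_productArray (q : Fin d → ℕ) (T : Fin d → ℤ → ℝ) (r : Fin d → ℕ)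
    (f : Fin d → ℤ → ℝ) :
    Dall q T r (productArray f) =
      productArray fun k => weightedDiff (knotWeight (q k) (T k)) (r k) (f k) := by
  simp only [Dall, foldr_Dop_productArray q T r f (List.nodup_finRange d), List.mem_finRange,
    if_true]

theorem Wmat_eq_prod (q r : Fin d → ℕ) (ks : Fin d → KnotSeq)
    (i : (k : Fin d) → Fin ((ks k).N + q k - r k)) (j : (k : Fin d) → Fin ((ks k).N + q k)) :
    Wmat q r ks i j =
      ∏ k, weightedDiff (knotWeight (q k) (ks k).T) (r k) (Pi.single ((j k : ℤ) + 1) 1)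
        ((i k : ℤ) + 1) := by
  simp only [Wmat, ← productArray_single, Dall_productArray]
  rfl

end ProductArray

section WeightedDiff

variable {ι : Type*} {w : ℕ → ℤ → ℝ} {M : ℝ} {r : ℕ}

-- Summing along a translate `a x + n` lets rows (`a` constant) and columns (`f` constant) share
-- one induction.
theorem sum_abs_weightedDiff_le (hw : ∀ s < r, ∀ j, |w s j| ≤ M) {B : ℝ} (S : Finset ι)
    (f : ι → ℤ → ℝ) (a : ι → ℤ) (hf : ∀ n, ∑ x ∈ S, |f x (a x + n)| ≤ B) (n : ℤ) :
    ∑ x ∈ S, |weightedDiff w r (f x) (a x + n)| ≤ (2 * M) ^ r * B := by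
  induction r generalizing n with
  | zero => simpa [weightedDiff] using hf n
  | succ r ih =>
    have hM : 0 ≤ M := (abs_nonneg _).trans (hw r r.lt_succ_self 0)
    replace ih := ih fun s hs => hw s (hs.trans r.lt_succ_self)
    have hstep (x : ι) : |weightedDiff w (r + 1) (f x) (a x + n)| ≤
        M * (|weightedDiff w r (f x) (a x + (n + 1))| + |weightedDiff w r (f x) (a x + n)|) := by
      rw [weightedDiff, abs_mul, ← add_assoc]
      exact mul_le_mul (hw r r.lt_succ_self _) (abs_sub _ _) (abs_nonneg _) hM
    calc ∑ x ∈ S, |weightedDiff w (r + 1) (f x) (a x + n)|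
        ≤ ∑ x ∈ S, M * (|weightedDiff w r (f x) (a x + (n + 1))| +
            |weightedDiff w r (f x) (a x + n)|) := Finset.sum_le_sum fun x _ => hstep x
      _ = M * (∑ x ∈ S, |weightedDiff w r (f x) (a x + (n + 1))| +
            ∑ x ∈ S, |weightedDiff w r (f x) (a x + n)|) := by
          rw [← Finset.mul_sum, Finset.sum_add_distrib]
      _ ≤ M * ((2 * M) ^ r * B + (2 * M) ^ r * B) := by gcongr <;> exact ih _
      _ = (2 * M) ^ (r + 1) * B := by ring

theorem sum_abs_weightedDiff_single_le [Fintype ι] (hw : ∀ s < r, ∀ j, |w s j| ≤ M)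
    {a b : ι → ℤ} (hab : Function.Injective (b - a)) :
    ∑ x, |weightedDiff w r (Pi.single (b x) 1) (a x)| ≤ (2 * M) ^ r := by
  have hsingle (n : ℤ) : ∑ x, |(Pi.single (b x) 1 : ℤ → ℝ) (a x + n)| ≤ 1 := by
    have hcard : (Finset.univ.filter fun x => a x + n = b x).card ≤ 1 :=
      Finset.card_le_one.mpr fun x hx y hy => hab <| by
        simp only [Finset.mem_filter_univ, Pi.sub_apply] at hx hy ⊢
        omega
    simpa [Pi.single_apply, apply_ite abs, Finset.sum_boole] using hcard
  simpa using sum_abs_weightedDiff_le hw Finset.univ _ a hsingle 0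

theorem sum_prod_abs_weightedDiff_single_le {κ : Type*} [Fintype κ] [DecidableEq κ]
    {β : κ → Type*} [∀ k, Fintype (β k)] {w : κ → ℕ → ℤ → ℝ} {M : κ → ℝ} {r : κ → ℕ}
    (hw : ∀ k, ∀ s < r k, ∀ j, |w k s j| ≤ M k) {a b : (k : κ) → β k → ℤ}
    (hab : ∀ k, Function.Injective (b k - a k)) :
    ∑ x : (k : κ) → β k,
        ∏ k, |weightedDiff (w k) (r k) (Pi.single (b k (x k)) 1) (a k (x k))| ≤
      ∏ k, (2 * M k) ^ r k := by
  rw [← Fintype.prod_sum fun k x =>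
    |weightedDiff (w k) (r k) (Pi.single (b k x) 1) (a k x)|]
  exact Finset.prod_le_prod (fun k _ => by positivity) fun k _ =>
    sum_abs_weightedDiff_single_le (hw k) (hab k)

end WeightedDiff

theorem eq_or_le_sub_of_forall_add_one {G : Type*} [AddCommGroup G] [PartialOrder G]
    [IsOrderedAddMonoid G] {T : ℤ → G} {δ : G} (hδ : 0 ≤ δ)
    (hT : ∀ l, T (l + 1) = T l ∨ δ ≤ T (l + 1) - T l) (a : ℤ) (n : ℕ) :
    T (a + n) = T a ∨ δ ≤ T (a + n) - T a := by
  induction n with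
  | zero => simp
  | succ n ih =>
    rw [Nat.cast_succ, ← add_assoc]
    rcases ih with ih | ih <;> rcases hT (a + n) with hstep | hstep
    · exact .inl (hstep.trans ih)
    · exact .inr (ih ▸ hstep)
    · exact .inr (hstep ▸ ih)
    · right
      rw [← sub_add_sub_cancel _ (T (a + n))]
      exact hstep.trans (le_add_of_nonneg_right (hδ.trans ih))

namespace KnotSeq

variable {ks : KnotSeq} {C₀ : ℝ}

theorem spacing_le_mesh (ks : KnotSeq) {l : ℕ} (hl : l < ks.N + 1) :
    ks.t (l + 1) - ks.t l ≤ ks.mesh :=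
  Finset.le_sup' (fun l => ks.t l - ks.t (l - 1)) (Finset.mem_Icc.mpr ⟨l.succ_pos, hl⟩)

theorem one_le_mul_mesh (ks : KnotSeq) : 1 ≤ (ks.N + 1) * ks.mesh := by
  calc (1 : ℝ) = ∑ l ∈ Finset.range (ks.N + 1), (ks.t (l + 1) - ks.t l) := by
        rw [Finset.sum_range_sub, ks.t0, ks.tN, sub_zero]
    _ ≤ ∑ _l ∈ Finset.range (ks.N + 1), ks.mesh :=
        Finset.sum_le_sum fun l hl => ks.spacing_le_mesh (Finset.mem_range.mp hl)
    _ = (ks.N + 1) * ks.mesh := by simp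

theorem T_natCast (ks : KnotSeq) {l : ℕ} (hl : l ≤ ks.N + 1) : ks.T l = ks.t l := by
  rcases Nat.eq_zero_or_pos l with rfl | hl₀
  · simp [T, ks.t0]
  rcases hl.eq_or_lt with rfl | hlN
  · rw [T, if_neg (by omega), if_pos (by omega), ks.tN]
  · rw [T, if_neg (by omega), if_neg (by omega), Int.toNat_natCast]

namespace QuasiUniform

theorem one_le_mul_spacing (h : ks.QuasiUniform C₀) {l : ℕ} (hl : l < ks.N + 1) :
    1 ≤ C₀ * (ks.N + 1) * (ks.t (l + 1) - ks.t l) := by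
  have hmesh : ks.mesh ≤ C₀ * (ks.t (l + 1) - ks.t l) :=
    h (l + 1) (Finset.mem_Icc.mpr ⟨l.succ_pos, hl⟩)
  calc (1 : ℝ) ≤ (ks.N + 1) * ks.mesh := ks.one_le_mul_mesh
    _ ≤ (ks.N + 1) * (C₀ * (ks.t (l + 1) - ks.t l)) := by gcongr
    _ = C₀ * (ks.N + 1) * (ks.t (l + 1) - ks.t l) := by ring

theorem const_pos (h : ks.QuasiUniform C₀) : 0 < C₀ := by
  have hspacing : 0 < ks.t 1 - ks.t 0 := sub_pos.mpr (ks.mono 0 ks.N.succ_pos)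
  have hmul := zero_lt_one.trans_le (h.one_le_mul_spacing ks.N.succ_pos)
  exact pos_of_mul_pos_left (pos_of_mul_pos_left hmul hspacing.le) (by positivity)

theorem T_add_one_eq_or_le (h : ks.QuasiUniform C₀) (l : ℤ) :
    ks.T (l + 1) = ks.T l ∨ (C₀ * (ks.N + 1))⁻¹ ≤ ks.T (l + 1) - ks.T l := by
  rcases lt_or_ge l 0 with hneg | hnonneg
  · left
    rw [T, T, if_pos (by omega), if_pos hneg.le]
  rcases le_or_gt (ks.N + 1 : ℤ) l with hlarge | hsmall
  · left
    rw [T, T, if_neg (by omega), if_pos (by omega), if_neg (by omega), if_pos hlarge]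
  right
  lift l to ℕ using hnonneg
  have hl : l < ks.N + 1 := by exact_mod_cast hsmall
  have hpos : 0 < C₀ * (ks.N + 1) := mul_pos h.const_pos (by positivity)
  rw [← Nat.cast_succ (R := ℤ), ks.T_natCast hl, ks.T_natCast hl.le, inv_le_iff_one_le_mul₀' hpos]
  exact h.one_le_mul_spacing hl

theorem abs_inv_T_sub_le (h : ks.QuasiUniform C₀) (a : ℤ) (n : ℕ) :
    |(ks.T (a + n) - ks.T a)⁻¹| ≤ C₀ * (ks.N + 1) := by
  have hpos : 0 < C₀ * (ks.N + 1) := mul_pos h.const_pos (by positivity)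
  have hδ : 0 < (C₀ * (ks.N + 1))⁻¹ := inv_pos.mpr hpos
  rcases eq_or_le_sub_of_forall_add_one hδ.le h.T_add_one_eq_or_le a n with heq | hle
  · simpa [heq] using hpos.le
  · rw [abs_of_pos (inv_pos.mpr (hδ.trans_le hle))]
    exact inv_le_of_inv_le₀ hpos hle

theorem abs_knotWeight_le (h : ks.QuasiUniform C₀) {q s : ℕ} (hs : s < q) (j : ℤ) :
    |knotWeight q ks.T s j| ≤ q * C₀ * (ks.N + q : ℕ) := by
  have hC₀ : 0 < C₀ := h.const_pos
  have hsq : (s : ℝ) + 1 ≤ q := by exact_mod_cast hs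
  have hfactor : |(q : ℝ) - (s + 1)| ≤ q := by
    rw [abs_of_nonneg (sub_nonneg.mpr hsq)]
    exact sub_le_self _ (by positivity)
  have hinv : |(ks.T j - ks.T (j - q + 1))⁻¹| ≤ C₀ * (ks.N + 1) := by
    have hj : j - q + 1 + ((q - 1 : ℕ) : ℤ) = j := by omega
    simpa only [hj] using h.abs_inv_T_sub_le (j - q + 1) (q - 1)
  have hJ : (ks.N : ℝ) + 1 ≤ (ks.N + q : ℕ) := by exact_mod_cast (by omega : ks.N + 1 ≤ ks.N + q)
  rw [knotWeight, div_eq_mul_inv, abs_mul, mul_assoc]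
  gcongr
  exact hinv.trans (by gcongr)

end QuasiUniform

end KnotSeq

section Wmat

variable {d : ℕ} {q r : Fin d → ℕ} {C₀ : ℝ} {ks : Fin d → KnotSeq}

theorem sum_abs_Wmat_row_le (hr : ∀ k, r k ≤ q k) (hks : ∀ k, (ks k).QuasiUniform C₀)
    (i : (k : Fin d) → Fin ((ks k).N + q k - r k)) :
    ∑ j : (k : Fin d) → Fin ((ks k).N + q k), |Wmat q r ks i j| ≤
      ∏ k, (2 * (q k * C₀ * ((ks k).N + q k : ℕ))) ^ r k := by
  simp only [Wmat_eq_prod, Finset.abs_prod]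
  refine sum_prod_abs_weightedDiff_single_le (w := fun k => knotWeight (q k) (ks k).T)
    (a := fun k (_ : Fin ((ks k).N + q k)) => (i k : ℤ) + 1) (b := fun k x => (x : ℤ) + 1)
    (fun k s hs => (hks k).abs_knotWeight_le (hs.trans_le (hr k))) fun k x y hxy => ?_
  simpa [Fin.ext_iff] using hxy

theorem sum_abs_Wmat_col_le (hr : ∀ k, r k ≤ q k) (hks : ∀ k, (ks k).QuasiUniform C₀)
    (j : (k : Fin d) → Fin ((ks k).N + q k)) :
    ∑ i : (k : Fin d) → Fin ((ks k).N + q k - r k), |Wmat q r ks i j| ≤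
      ∏ k, (2 * (q k * C₀ * ((ks k).N + q k : ℕ))) ^ r k := by
  simp only [Wmat_eq_prod, Finset.abs_prod]
  refine sum_prod_abs_weightedDiff_single_le (w := fun k => knotWeight (q k) (ks k).T)
    (a := fun k (x : Fin ((ks k).N + q k - r k)) => (x : ℤ) + 1) (b := fun k _ => (j k : ℤ) + 1)
    (fun k s hs => (hks k).abs_knotWeight_le (hs.trans_le (hr k))) fun k x y hxy => ?_
  simpa [Fin.ext_iff] using hxy

end Wmat

section SchurTest

open scoped Matrix

variable {m n : Type*} [Fintype n] {A : Matrix m n ℝ} {R C : ℝ}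

theorem sq_mulVec_le_of_row_sum_le {i : m} (hrow : ∑ j, |A i j| ≤ R) (θ : n → ℝ) :
    (A *ᵥ θ) i ^ 2 ≤ R * ∑ j, |A i j| * θ j ^ 2 := by
  calc (A *ᵥ θ) i ^ 2 ≤ (∑ j, |A i j|) * ∑ j, |A i j| * θ j ^ 2 :=
        Finset.sum_sq_le_sum_mul_sum_of_sq_le_mul _ (fun _ _ => abs_nonneg _)
          (fun _ _ => by positivity) fun j _ => by
            rw [← mul_assoc, abs_mul_abs_self, mul_pow, sq (A i j)]
    _ ≤ R * ∑ j, |A i j| * θ j ^ 2 := by gcongr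

theorem schur_test_sum_sq_mulVec_le [Fintype m] (hR : 0 ≤ R) (hrow : ∀ i, ∑ j, |A i j| ≤ R)
    (hcol : ∀ j, ∑ i, |A i j| ≤ C) (θ : n → ℝ) :
    ∑ i, (A *ᵥ θ) i ^ 2 ≤ R * C * ∑ j, θ j ^ 2 := by
  calc ∑ i, (A *ᵥ θ) i ^ 2 ≤ ∑ i, R * ∑ j, |A i j| * θ j ^ 2 :=
        Finset.sum_le_sum fun i _ => sq_mulVec_le_of_row_sum_le (hrow i) θ
    _ = R * ∑ j, (∑ i, |A i j|) * θ j ^ 2 := by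
        rw [← Finset.mul_sum, Finset.sum_comm]
        simp only [Finset.sum_mul]
    _ ≤ R * ∑ j, C * θ j ^ 2 := by gcongr with j; exact hcol j
    _ = R * C * ∑ j, θ j ^ 2 := by rw [← Finset.mul_sum, mul_assoc]

end SchurTest

/-- For orders `q`, derivative orders `r_k ≤ q_k − 1` and quasi-uniform
knot sequences (constant `C₀`), there is a constant `C > 0` depending only on
`q, r, d, C₀` such that `‖W_r‖_{(∞,∞)} ≤ C Π_k J_k^{r_k}` (every row sum of absolute
entries is so bounded), `‖W_rᵀ‖_{(∞,∞)} ≤ C Π_k J_k^{r_k}` (every column sum likewise),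
and `‖W_rᵀW_r‖_{(2,2)} ≤ C Π_k J_k^{2 r_k}` (the quadratic form `θᵀ W_rᵀ W_r θ = ‖W_r θ‖²`
is bounded by `C Π_k J_k^{2 r_k} ‖θ‖²`). -/
theorem statement18 (d : ℕ) (hd : 1 ≤ d) (q r : Fin d → ℕ) (hr : ∀ k, r k < q k)
    (C₀ : ℝ) (hC₀ : 1 ≤ C₀) :
    ∃ C > (0 : ℝ), ∀ (ks : Fin d → KnotSeq), (∀ k, (ks k).QuasiUniform C₀) →
      (∀ i : (k : Fin d) → Fin ((ks k).N + q k - r k),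
          ∑ j : (k : Fin d) → Fin ((ks k).N + q k), |Wmat q r ks i j| ≤
            C * ∏ k, (((ks k).N + q k : ℕ) : ℝ) ^ r k) ∧
        (∀ j : (k : Fin d) → Fin ((ks k).N + q k),
          ∑ i : (k : Fin d) → Fin ((ks k).N + q k - r k), |Wmat q r ks i j| ≤
            C * ∏ k, (((ks k).N + q k : ℕ) : ℝ) ^ r k) ∧
        (∀ θ : ((k : Fin d) → Fin ((ks k).N + q k)) → ℝ,
          (∑ i : (k : Fin d) → Fin ((ks k).N + q k - r k),
              (∑ j, Wmat q r ks i j * θ j) ^ 2) ≤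
            C * (∏ k, (((ks k).N + q k : ℕ) : ℝ) ^ (2 * r k)) * ∑ j, θ j ^ 2) := by
  set A : ℝ := ∏ k, (2 * (q k * C₀)) ^ r k
  have hA : 1 ≤ A := by
    refine Finset.one_le_prod fun k _ => one_le_pow₀ ?_
    have hq : (1 : ℝ) ≤ q k := by exact_mod_cast (hr k).pos
    nlinarith
  refine ⟨A ^ 2, by positivity, fun ks hks => ?_⟩
  set P : ℝ := ∏ k, (((ks k).N + q k : ℕ) : ℝ) ^ r k
  have : 0 ≤ P := by positivity
  have hAP : ∏ k, (2 * (q k * C₀ * ((ks k).N + q k : ℕ))) ^ r k = A * P := by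
    simp only [A, P, ← Finset.prod_mul_distrib, ← mul_pow, mul_assoc]
  have hP_sq : ∏ k, (((ks k).N + q k : ℕ) : ℝ) ^ (2 * r k) = P ^ 2 := by
    simp only [P, ← Finset.prod_pow, ← pow_mul, mul_comm]
  have hrow i := (sum_abs_Wmat_row_le (fun k => (hr k).le) hks i).trans_eq hAP
  have hcol j := (sum_abs_Wmat_col_le (fun k => (hr k).le) hks j).trans_eq hAP
  have hAP_le : A * P ≤ A ^ 2 * P := by gcongr; exact le_self_pow₀ hA two_ne_zero
  refine ⟨fun i => (hrow i).trans hAP_le, fun j => (hcol j).trans hAP_le, fun θ => ?_⟩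
  rw [hP_sq, ← mul_pow, sq (A * P)]
  exact schur_test_sum_sq_mulVec_le (by positivity) hrow hcol θ
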